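/- In the calculus λ_S, the open terms ⟨x i⟩ and (λy.⟨x i⟩) ⟨x i⟩ (where i := λz.z and y is not free in the terms) are related by the open extension of contextual equivalence: for every closed value v, ⟨v i⟩ ≈ (λy.⟨v i⟩) ⟨v i⟩. -/

import Mathlib

namespace LambdaS

/-- Terms of the calculus λ_S: variables, λ-abstractions, applications,
the shift operator `S k.t`, and the reset delimiter `⟨t⟩`. -/
inductive Tm : Type
  | var : ℕ → Tm
  | lam : ℕ → Tm → Tm
  | app : Tm → Tm → Tm
  | shift : ℕ → Tm → Tm
  | reset : Tm → Tm
  deriving DecidableEq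

/-- A variable fresh for a finite set of variables. -/
def fresh (s : Finset ℕ) : ℕ := if h : s.Nonempty then s.max' h + 1 else 0

namespace Tm

/-- Free variables. -/
def fv : Tm → Finset ℕ
  | var x => {x}
  | lam x t => fv t \ {x}
  | app t u => fv t ∪ fv u
  | shift k t => fv t \ {k}
  | reset t => fv t

def size : Tm → ℕ
  | var _ => 1
  | lam _ t => size t + 1
  | app t u => size t + size u + 1
  | shift _ t => size t + 1
  | reset t => size t + 1

/-- Renaming of free occurrences of a variable (used for α-renaming with a
fresh target variable). -/
def rename : Tm → ℕ → ℕ → Tm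
  | var w, y, z => if w = y then var z else var w
  | lam w t, y, z => if w = y then lam w t else lam w (rename t y z)
  | app t u, y, z => app (rename t y z) (rename u y z)
  | shift w t, y, z => if w = y then shift w t else shift w (rename t y z)
  | reset t, y, z => reset (rename t y z)

theorem size_rename (t : Tm) (y z : ℕ) : size (rename t y z) = size t := by
  induction t generalizing y z with
  | var w => simp only [rename]; split <;> rfl
  | lam w t ih => simp only [rename]; split <;> simp [size, ih]
  | app t u iht ihu => simp [rename, size, iht, ihu]
  | shift w t ih => simp only [rename]; split <;> simp [size, ih]
  | reset t ih => simp [rename, size, ih]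

/-- Capture-avoiding substitution `t{v/x}` of `v` for the free occurrences of
`x` in `t`; bound variables are α-renamed when needed. -/
def subst : Tm → ℕ → Tm → Tm
  | var w, x, v => if w = x then v else var w
  | lam y t, x, v =>
      if y = x then lam y t
      else if y ∈ fv v then
        lam (fresh (fv v ∪ fv t ∪ {x}))
          (subst (rename t y (fresh (fv v ∪ fv t ∪ {x}))) x v)
      else lam y (subst t x v)
  | app t u, x, v => app (subst t x v) (subst u x v)
  | shift y t, x, v =>
      if y = x then shift y t
      else if y ∈ fv v then
        shift (fresh (fv v ∪ fv t ∪ {x}))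
          (subst (rename t y (fresh (fv v ∪ fv t ∪ {x}))) x v)
      else shift y (subst t x v)
  | reset t, x, v => reset (subst t x v)
termination_by t _ _ => size t
decreasing_by all_goals simp [size_rename, size] <;> omega

end Tm

/-- Values: variables and λ-abstractions. -/
inductive IsValue : Tm → Prop
  | var (x : ℕ) : IsValue (Tm.var x)
  | lam (x : ℕ) (t : Tm) : IsValue (Tm.lam x t)

/-- A term is closed if it has no free variables. -/
def Closed (t : Tm) : Prop := t.fv = ∅

/-- Pure evaluation contexts E ::= □ | v E | E t. -/
inductive ECtx : Type
  | hole : ECtx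
  | appR : (v : Tm) → IsValue v → ECtx → ECtx
  | appL : ECtx → Tm → ECtx

def ECtx.plug : ECtx → Tm → Tm
  | .hole, t => t
  | .appR v _ E, t => Tm.app v (E.plug t)
  | .appL E u, t => Tm.app (E.plug t) u

def ECtx.fv : ECtx → Finset ℕ
  | .hole => ∅
  | .appR v _ E => v.fv ∪ E.fv
  | .appL E u => E.fv ∪ u.fv

/-- Composition of pure contexts: `(E.comp E').plug t = E.plug (E'.plug t)`. -/
def ECtx.comp : ECtx → ECtx → ECtx
  | .hole, E' => E'
  | .appR v hv E, E' => .appR v hv (E.comp E')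
  | .appL E u, E' => .appL (E.comp E') u

/-- Evaluation contexts F ::= □ | v F | F t | ⟨F⟩. -/
inductive FCtx : Type
  | hole : FCtx
  | appR : (v : Tm) → IsValue v → FCtx → FCtx
  | appL : FCtx → Tm → FCtx
  | reset : FCtx → FCtx

def FCtx.plug : FCtx → Tm → Tm
  | .hole, t => t
  | .appR v _ F, t => Tm.app v (F.plug t)
  | .appL F u, t => Tm.app (F.plug t) u
  | .reset F, t => Tm.reset (F.plug t)

def FCtx.fv : FCtx → Finset ℕ
  | .hole => ∅
  | .appR v _ F => v.fv ∪ F.fv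
  | .appL F u => F.fv ∪ u.fv
  | .reset F => F.fv

/-- The function `λx.⟨E[x]⟩` representing the captured delimited context `E`,
where `x` is chosen fresh (in particular `x ∉ fv E`). -/
def contFun (E : ECtx) : Tm :=
  Tm.lam (fresh E.fv) (Tm.reset (E.plug (Tm.var (fresh E.fv))))

/-- Call-by-value reduction →_v of λ_S. -/
inductive Red : Tm → Tm → Prop
  | beta (F : FCtx) (x : ℕ) (t v : Tm) :
      IsValue v →
      Red (F.plug (Tm.app (Tm.lam x t) v)) (F.plug (t.subst x v))
  | capture (F : FCtx) (E : ECtx) (k : ℕ) (t : Tm) :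
      Red (F.plug (Tm.reset (E.plug (Tm.shift k t))))
          (F.plug (Tm.reset (t.subst k (contFun E))))
  | resetVal (F : FCtx) (v : Tm) :
      IsValue v →
      Red (F.plug (Tm.reset v)) (F.plug v)

/-- A stuck term: not a value and unable to reduce. -/
def Stuck (t : Tm) : Prop := ¬ IsValue t ∧ ∀ t', ¬ Red t t'

/-- Normal forms: values and stuck terms. -/
def NormalForm (t : Tm) : Prop := IsValue t ∨ Stuck t

/-- A control-stuck term has the form E[S k.t]. -/
def ControlStuck (t : Tm) : Prop :=
  ∃ (E : ECtx) (k : ℕ) (s : Tm), t = E.plug (Tm.shift k s)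

/-- Evaluation: `t ⇓ t'` iff `t →_v* t'` and `t'` is a normal form. -/
def Evals (t t' : Tm) : Prop := Relation.ReflTransGen Red t t' ∧ NormalForm t'

/-- `t` evaluates to some value. -/
def EvalsToValue (t : Tm) : Prop := ∃ v, Relation.ReflTransGen Red t v ∧ IsValue v

/-- `t` evaluates to some control-stuck term. -/
def EvalsToStuck (t : Tm) : Prop :=
  ∃ s, Relation.ReflTransGen Red t s ∧ ControlStuck s

/-- General contexts C ::= □ | λx.C | t C | C t | S k.C | ⟨C⟩. -/
inductive Ctx : Type
  | hole : Ctx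
  | lam : ℕ → Ctx → Ctx
  | appL : Ctx → Tm → Ctx
  | appR : Tm → Ctx → Ctx
  | shift : ℕ → Ctx → Ctx
  | reset : Ctx → Ctx

def Ctx.plug : Ctx → Tm → Tm
  | .hole, t => t
  | .lam x C, t => Tm.lam x (C.plug t)
  | .appL C u, t => Tm.app (C.plug t) u
  | .appR u C, t => Tm.app u (C.plug t)
  | .shift k C, t => Tm.shift k (C.plug t)
  | .reset C, t => Tm.reset (C.plug t)

def Ctx.fv : Ctx → Finset ℕ
  | .hole => ∅
  | .lam x C => C.fv \ {x}
  | .appL C u => C.fv ∪ u.fv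
  | .appR u C => u.fv ∪ C.fv
  | .shift k C => C.fv \ {k}
  | .reset C => C.fv

/-- Contextual equivalence ≈ for the relaxed semantics (on closed terms):
tests evaluation to values and evaluation to control-stuck terms in every
closed context. -/
def CtxEquiv (t0 t1 : Tm) : Prop :=
  ∀ C : Ctx, C.fv = ∅ →
    (EvalsToValue (C.plug t0) ↔ EvalsToValue (C.plug t1)) ∧
    (EvalsToStuck (C.plug t0) ↔ EvalsToStuck (C.plug t1))

/-- Contextual equivalence ≈_p for the original semantics: tests evaluation to
values of ⟨C[·]⟩ in every closed context C. -/
def CtxEquivP (t0 t1 : Tm) : Prop :=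
  ∀ C : Ctx, C.fv = ∅ →
    (EvalsToValue (Tm.reset (C.plug t0)) ↔ EvalsToValue (Tm.reset (C.plug t1)))

/-- Contextual equivalence ≈_E testing only with closed evaluation contexts. -/
def ECtxEquiv (t0 t1 : Tm) : Prop :=
  ∀ F : FCtx, F.fv = ∅ →
    (EvalsToValue (F.plug t0) ↔ EvalsToValue (F.plug t1)) ∧
    (EvalsToStuck (F.plug t0) ↔ EvalsToStuck (F.plug t1))

/-- Applicative simulation. -/
def IsAppSim (R : Tm → Tm → Prop) : Prop :=
  ∀ t0 t1, R t0 t1 →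
    (∀ t0', Red t0 t0' →
      ∃ t1', Relation.ReflTransGen Red t1 t1' ∧ R t0' t1') ∧
    (∀ x t0', t0 = Tm.lam x t0' →
      ∃ t1', Relation.ReflTransGen Red t1 (Tm.lam x t1') ∧
        ∀ v, IsValue v → Closed v → R (t0'.subst x v) (t1'.subst x v)) ∧
    (∀ (E0 : ECtx) (k : ℕ) (t0' : Tm), t0 = E0.plug (Tm.shift k t0') →
      ∃ (E1 : ECtx) (t1' : Tm),
        Relation.ReflTransGen Red t1 (E1.plug (Tm.shift k t1')) ∧
        ∀ E : ECtx, E.fv = ∅ →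
          R (Tm.reset (t0'.subst k (contFun (E.comp E0))))
            (Tm.reset (t1'.subst k (contFun (E.comp E1)))))

/-- Applicative bisimulation. -/
def IsAppBisim (R : Tm → Tm → Prop) : Prop :=
  IsAppSim R ∧ IsAppSim (fun a b => R b a)

/-- Applicative bisimilarity ≈_app: the largest applicative bisimulation. -/
def AppBisim (t0 t1 : Tm) : Prop := ∃ R, IsAppBisim R ∧ R t0 t1

/-- Simultaneous substitution (used only with closing substitutions mapping
variables to closed values, so no capture can occur). -/
def Tm.msubst : Tm → (ℕ → Tm) → Tm
  | .var x, σ => σ x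
  | .lam x t, σ => Tm.lam x (t.msubst (Function.update σ x (Tm.var x)))
  | .app t u, σ => Tm.app (t.msubst σ) (u.msubst σ)
  | .shift k t, σ => Tm.shift k (t.msubst (Function.update σ k (Tm.var k)))
  | .reset t, σ => Tm.reset (t.msubst σ)

/-- Open extension of a relation on closed terms: relate `t0σ` and `t1σ` for
every substitution σ mapping variables to closed values. -/
def OpenExt (R : Tm → Tm → Prop) (t0 t1 : Tm) : Prop :=
  ∀ σ : ℕ → Tm, (∀ x, IsValue (σ x) ∧ Closed (σ x)) →
    R (t0.msubst σ) (t1.msubst σ)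

/-- ω := λx.x x. -/
def omegaTm : Tm := Tm.lam 0 (Tm.app (Tm.var 0) (Tm.var 0))

/-- Ω := ω ω, a diverging term. -/
def OmegaTm : Tm := Tm.app omegaTm omegaTm


/-- i := λz.z, the identity. -/
def idTm : Tm := Tm.lam 0 (Tm.var 0)

/-! The point of `⟨t⟩` is that, for closed `t`, it cannot get control-stuck: it diverges or reduces
to a value `w`. In the first case `(λy.⟨t⟩) ⟨t⟩` diverges too; in the second,
`(λy.⟨t⟩) ⟨t⟩ →* (λy.⟨t⟩) w → ⟨t⟩ →* w`.

Now let `p` and `q` be closed terms which both diverge or have a common reduct `w`, and run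
`C[p]` and `C[q]` in lockstep. The two runs perform the same steps until a copy of `p` and a copy
of `q` face each other in evaluation position, `F[p]` against `F'[q]`. If `p` diverges, so does
`F[p]`; otherwise replace both copies by `w` and go on. As `→_v` is deterministic, this terminates
if `C[p]` does, provided `p` makes at least one step to reach `w`. -/

open Relation Relator

/-! ### Reduction -/

/-- The composite context `F[G]`, through which reductions can be moved into a context. -/
def FCtx.comp : FCtx → FCtx → FCtx
  | .hole, G => G
  | .appR v hv F, G => .appR v hv (F.comp G)
  | .appL F u, G => .appL (F.comp G) u
  | .reset F, G => .reset (F.comp G)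

theorem FCtx.plug_comp (F G : FCtx) (t : Tm) : (F.comp G).plug t = F.plug (G.plug t) := by
  induction F with
  | hole => rfl
  | appR v _ _ ih => exact congrArg (Tm.app v) ih
  | appL _ u ih => exact congrArg (Tm.app · u) ih
  | reset _ ih => exact congrArg Tm.reset ih

theorem Red.plug (F : FCtx) {t t' : Tm} (h : Red t t') : Red (F.plug t) (F.plug t') := by
  cases h with
  | beta G x t v hv => simpa only [FCtx.plug_comp] using Red.beta (F.comp G) x t v hv
  | capture G E k t => simpa only [FCtx.plug_comp] using Red.capture (F.comp G) E k t
  | resetVal G v hv => simpa only [FCtx.plug_comp] using Red.resetVal (F.comp G) v hv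

/-- Call-by-value reduction presented by structural rules. It coincides with `Red`, but is closed
under evaluation contexts one frame at a time, so that it can be inverted by case analysis. -/
inductive Step : Tm → Tm → Prop
  | beta {x : ℕ} {t v : Tm} : IsValue v → Step (.app (.lam x t) v) (t.subst x v)
  | capture (E : ECtx) (k : ℕ) (t : Tm) :
      Step (.reset (E.plug (.shift k t))) (.reset (t.subst k (contFun E)))
  | resetVal {v : Tm} : IsValue v → Step (.reset v) v
  | appL {t t' : Tm} (u : Tm) : Step t t' → Step (.app t u) (.app t' u)
  | appR {v t t' : Tm} : IsValue v → Step t t' → Step (.app v t) (.app v t')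
  | reset {t t' : Tm} : Step t t' → Step (.reset t) (.reset t')

local infix:50 "⇝" => Step
local infix:50 "⇝*" => ReflTransGen Step
local infix:50 "⇝⁺" => TransGen Step

theorem Step.plug (F : FCtx) {t t' : Tm} (h : t ⇝ t') : F.plug t ⇝ F.plug t' := by
  induction F with
  | hole => exact h
  | appR _ hv _ ih => exact .appR hv ih
  | appL _ u ih => exact .appL u ih
  | reset _ ih => exact .reset ih

theorem reduces_plug (F : FCtx) {t t' : Tm} (h : t ⇝* t') : F.plug t ⇝* F.plug t' :=
  ReflTransGen.lift F.plug (fun _ _ => Step.plug F) _ _ h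

theorem red_eq_step : Red = Step := by
  ext t t'
  constructor
  · rintro (⟨F, _, _, _, hv⟩ | ⟨F, E, k, s⟩ | ⟨F, _, hv⟩)
    · exact .plug F (.beta hv)
    · exact .plug F (.capture E k s)
    · exact .plug F (.resetVal hv)
  · intro h
    induction h with
    | beta hv => exact .beta .hole _ _ _ hv
    | capture E k s => exact .capture .hole E k s
    | resetVal hv => exact .resetVal .hole _ hv
    | appL u _ ih => exact ih.plug (.appL .hole u)
    | appR hv _ ih => exact ih.plug (.appR _ hv .hole)
    | reset _ ih => exact ih.plug (.reset .hole)

/-! ### Determinism -/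

theorem IsValue.not_step {v t : Tm} (hv : IsValue v) : ¬ v ⇝ t := by
  cases hv <;> nofun

theorem not_isValue_plug_shift {E : ECtx} {k : ℕ} {s : Tm} : ¬ IsValue (E.plug (.shift k s)) := by
  cases E <;> nofun

theorem plug_shift_inj {E E' : ECtx} {k k' : ℕ} {s s' : Tm}
    (h : E.plug (.shift k s) = E'.plug (.shift k' s')) : E = E' ∧ k = k' ∧ s = s' := by
  induction E generalizing E' with
  | hole => cases E' <;> simp_all [ECtx.plug]
  | appR v hv E ih =>
    cases E' <;> simp only [ECtx.plug, Tm.app.injEq, reduceCtorEq] at h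
    case appR =>
      obtain ⟨rfl, h⟩ := h
      obtain ⟨rfl, rfl, rfl⟩ := ih h
      exact ⟨rfl, rfl, rfl⟩
    case appL => exact absurd (h.1 ▸ hv) not_isValue_plug_shift
  | appL E u ih =>
    cases E' <;> simp only [ECtx.plug, Tm.app.injEq, reduceCtorEq] at h
    case appR _ hv' _ => exact absurd (h.1 ▸ hv') not_isValue_plug_shift
    case appL =>
      obtain ⟨h, rfl⟩ := h
      obtain ⟨rfl, rfl, rfl⟩ := ih h
      exact ⟨rfl, rfl, rfl⟩

theorem ControlStuck.not_isValue {t : Tm} (ht : ControlStuck t) : ¬ IsValue t := by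
  obtain ⟨E, k, s, rfl⟩ := ht
  exact not_isValue_plug_shift

theorem ControlStuck.not_step {t t' : Tm} (ht : ControlStuck t) : ¬ t ⇝ t' := by
  obtain ⟨E, k, s, rfl⟩ := ht
  have not_value (E : ECtx) := not_isValue_plug_shift (E := E) (k := k) (s := s)
  induction E generalizing t' with
  | hole => nofun
  | appR v hv E ih =>
    intro h
    generalize ht : E.plug (.shift k s) = t at ih
    simp only [ECtx.plug, ht] at h
    cases h with
    | beta hw => exact not_value E (ht ▸ hw)
    | appL _ h => exact hv.not_step h
    | appR _ h => exact ih h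
  | appL E u ih =>
    intro h
    generalize ht : E.plug (.shift k s) = t at ih
    simp only [ECtx.plug, ht] at h
    cases h with
    | beta => exact not_value E (ht ▸ .lam _ _)
    | appL _ h => exact ih h
    | appR hw _ => exact not_value E (ht ▸ hw)

theorem Step.rightUnique : RightUnique Step := by
  intro t a b ha hb
  induction ha generalizing b with
  | beta hv =>
    cases hb with
    | beta => rfl
    | appL _ h => exact absurd h (IsValue.lam _ _).not_step
    | appR _ h => exact absurd h hv.not_step
  | capture E k s =>
    have hs : ControlStuck (E.plug (.shift k s)) := ⟨E, k, s, rfl⟩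
    generalize ht : E.plug (.shift k s) = t at hb hs
    cases hb with
    | capture => obtain ⟨rfl, rfl, rfl⟩ := plug_shift_inj ht; rfl
    | resetVal hv => exact absurd hv hs.not_isValue
    | reset h => exact absurd h hs.not_step
  | resetVal hv =>
    cases hb with
    | capture => exact absurd hv not_isValue_plug_shift
    | resetVal => rfl
    | reset h => exact absurd h hv.not_step
  | appL u h ih =>
    cases hb with
    | beta => exact absurd h (IsValue.lam _ _).not_step
    | appL _ h' => rw [ih h']
    | appR hv _ => exact absurd h hv.not_step
  | appR hv h ih =>
    cases hb with
    | beta hw => exact absurd h hw.not_step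
    | appL _ h' => exact absurd h' hv.not_step
    | appR _ h' => rw [ih h']
  | reset h ih =>
    cases hb with
    | capture E k s => exact absurd h (ControlStuck.not_step ⟨E, k, s, rfl⟩)
    | resetVal hv => exact absurd h hv.not_step
    | reset h' => rw [ih h']

theorem eq_of_irreducible {t u u' : Tm} (h : t ⇝* u) (hu : ∀ s, ¬ u ⇝ s) (h' : t ⇝* u')
    (hu' : ∀ s, ¬ u' ⇝ s) : u = u' := by
  rcases ReflTransGen.total_of_right_unique Step.rightUnique h h' with h | h
  · exact ((reflTransGen_iff_eq hu).1 h).symm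
  · exact (reflTransGen_iff_eq hu').1 h

theorem EvalsToValue.not_evalsToStuck {t : Tm} (hv : EvalsToValue t) : ¬ EvalsToStuck t := by
  rintro ⟨s, hts, hs⟩
  obtain ⟨v, htv, hv⟩ := hv
  rw [red_eq_step] at hts htv
  have hvs : v = s := eq_of_irreducible htv (fun _ => hv.not_step) hts (fun _ => hs.not_step)
  exact hs.not_isValue (hvs ▸ hv)

/-! ### Termination -/

/-- A term terminates if it has no infinite reduction sequence. -/
def Terminates (t : Tm) : Prop := Acc (Function.swap Step) t

theorem terminates_of_reduces {t u : Tm} (h : t ⇝* u) (hu : ∀ s, ¬ u ⇝ s) : Terminates t := by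
  induction h using ReflTransGen.head_induction_on with
  | refl => exact .intro u fun s hs => absurd hs (hu s)
  | head hs _ ih => exact .intro _ fun s' hs' => Step.rightUnique hs hs' ▸ ih

theorem EvalsToValue.terminates {t : Tm} (h : EvalsToValue t) : Terminates t := by
  obtain ⟨v, htv, hv⟩ := h
  exact terminates_of_reduces (red_eq_step ▸ htv) fun _ => hv.not_step

theorem EvalsToStuck.terminates {t : Tm} (h : EvalsToStuck t) : Terminates t := by
  obtain ⟨s, hts, hs⟩ := h
  exact terminates_of_reduces (red_eq_step ▸ hts) fun _ => hs.not_step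

theorem Terminates.of_plug {F : FCtx} {t : Tm} (h : Terminates (F.plug t)) : Terminates t :=
  Subrelation.accessible (Step.plug F) (InvImage.accessible F.plug h)

/-! ### Closed terms -/

theorem closed_app {t u : Tm} : Closed (.app t u) ↔ Closed t ∧ Closed u :=
  Finset.union_eq_empty

theorem closed_reset {t : Tm} : Closed (.reset t) ↔ Closed t :=
  Iff.rfl

theorem Closed.lam {t : Tm} (ht : Closed t) (y : ℕ) : Closed (.lam y t) := by
  rw [Closed, Tm.fv, ht, Finset.empty_sdiff]

theorem closed_idTm : Closed idTm := rfl

namespace Tm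

variable {v : Tm} (hv : Closed v)
include hv

theorem subst_lam_of_closed (x y : ℕ) (t : Tm) :
    (lam y t).subst x v = if y = x then lam y t else lam y (t.subst x v) := by
  have : v.fv = ∅ := hv
  simp [subst, this]

theorem subst_shift_of_closed (x y : ℕ) (t : Tm) :
    (shift y t).subst x v = if y = x then shift y t else shift y (t.subst x v) := by
  have : v.fv = ∅ := hv
  simp [subst, this]

theorem subst_of_notMem_fv {x : ℕ} {t : Tm} (hx : x ∉ t.fv) : t.subst x v = t := by
  induction t with grind [subst, subst_lam_of_closed, subst_shift_of_closed, fv]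

theorem fv_subst (x : ℕ) (t : Tm) : (t.subst x v).fv = t.fv \ {x} := by
  have hv' : v.fv = ∅ := hv
  induction t with grind [subst, subst_lam_of_closed, subst_shift_of_closed, fv]

end Tm

theorem ECtx.fv_plug (E : ECtx) (t : Tm) : (E.plug t).fv = E.fv ∪ t.fv := by
  induction E with
  | hole => exact (Finset.empty_union _).symm
  | appR v hv E ih => simp only [plug, fv, Tm.fv, ih, Finset.union_assoc]
  | appL E u ih => simp only [plug, fv, Tm.fv, ih, Finset.union_right_comm]

theorem ECtx.closed_plug {E : ECtx} {t : Tm} : Closed (E.plug t) ↔ E.fv = ∅ ∧ Closed t := by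
  simp only [Closed, fv_plug, Finset.union_eq_empty]

theorem Ctx.fv_plug_of_closed (C : Ctx) {t : Tm} (ht : Closed t) : (C.plug t).fv = C.fv := by
  induction C with
  | hole => exact ht
  | _ => simp only [plug, fv, Tm.fv, *]

theorem closed_contFun {E : ECtx} (hE : E.fv = ∅) : Closed (contFun E) := by
  simp [Closed, contFun, Tm.fv, ECtx.fv_plug, hE]

theorem Closed.step {t t' : Tm} (ht : Closed t) (h : t ⇝ t') : Closed t' := by
  induction h with
  | beta =>
    obtain ⟨hlam, hv⟩ := closed_app.1 ht
    exact (Tm.fv_subst hv _ _).trans hlam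
  | capture E k s =>
    obtain ⟨hE, hs⟩ := ECtx.closed_plug.1 ht
    exact (Tm.fv_subst (closed_contFun hE) k s).trans hs
  | resetVal => exact ht
  | appL u _ ih => exact closed_app.2 ((closed_app.1 ht).imp_left ih)
  | appR _ _ ih => exact closed_app.2 ((closed_app.1 ht).imp_right ih)
  | reset _ ih => exact ih ht

theorem Closed.reduces {t t' : Tm} (ht : Closed t) (h : t ⇝* t') : Closed t' := by
  induction h with
  | refl => exact ht
  | tail _ h ih => exact ih.step h

/-! ### Compatible closure -/

/-- The compatible closure of `R`: two terms are related if they differ only by occurrences of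
`R`-related subterms. It relates `C[p]` to `C[q]` if `R` relates `p` to `q`, even if `C`
captures variables. -/
inductive CompatClosure (R : Tm → Tm → Prop) : Tm → Tm → Prop
  | base {p q : Tm} : R p q → CompatClosure R p q
  | var (x : ℕ) : CompatClosure R (.var x) (.var x)
  | lam (x : ℕ) {t t' : Tm} : CompatClosure R t t' → CompatClosure R (.lam x t) (.lam x t')
  | app {t t' u u' : Tm} :
      CompatClosure R t t' → CompatClosure R u u' → CompatClosure R (.app t u) (.app t' u')
  | shift (k : ℕ) {t t' : Tm} : CompatClosure R t t' → CompatClosure R (.shift k t) (.shift k t')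
  | reset {t t' : Tm} : CompatClosure R t t' → CompatClosure R (.reset t) (.reset t')

/-- The ways in which related closed terms `t` and `t'` can behave: they are both values, both
control-stuck, both make a step preserving the relation, or have `R`-related subterms in
evaluation position. Contexts are related if they send related terms to related terms. -/
inductive Lockstep (R : Tm → Tm → Prop) : Tm → Tm → Prop
  | value {t t' : Tm} : IsValue t → IsValue t' → Lockstep R t t'
  | stuck {E E' : ECtx} (k : ℕ) {s s' : Tm} :
      LiftFun (CompatClosure R) (CompatClosure R) E.plug E'.plug → CompatClosure R s s' →
      Lockstep R (E.plug (.shift k s)) (E'.plug (.shift k s'))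
  | step {t t' s s' : Tm} : t ⇝ s → t' ⇝ s' → CompatClosure R s s' → Lockstep R t t'
  | base {F F' : FCtx} {p q : Tm} :
      LiftFun (CompatClosure R) (CompatClosure R) F.plug F'.plug → R p q →
      Lockstep R (F.plug p) (F'.plug q)

namespace CompatClosure

variable {R : Tm → Tm → Prop} {t t' u u' : Tm}

theorem refl (t : Tm) : CompatClosure R t t := by
  induction t with
  | var x => exact .var x
  | lam x _ ih => exact .lam x ih
  | app _ _ iht ihu => exact .app iht ihu
  | shift k _ ih => exact .shift k ih
  | reset _ ih => exact .reset ih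

theorem plug {p q : Tm} (h : R p q) (C : Ctx) : CompatClosure R (C.plug p) (C.plug q) := by
  induction C with
  | hole => exact .base h
  | lam x _ ih => exact .lam x ih
  | appL _ u ih => exact .app ih (refl u)
  | appR u _ ih => exact .app (refl u) ih
  | shift k _ ih => exact .shift k ih
  | reset _ ih => exact .reset ih

theorem fv_eq (hR : ∀ ⦃p q⦄, R p q → p.fv = q.fv) (h : CompatClosure R t t') : t.fv = t'.fv := by
  induction h with
  | base h => exact hR h
  | var => rfl
  | _ => simp only [Tm.fv, *]

section Closed

variable (hR : ∀ ⦃p q⦄, R p q → Closed p ∧ Closed q)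
include hR

theorem fv_eq_of_closed (h : CompatClosure R t t') : t.fv = t'.fv :=
  h.fv_eq fun _ _ hpq => (hR hpq).1.trans (hR hpq).2.symm

theorem subst {x : ℕ} (h : CompatClosure R t t') (hu : Closed u) (hr : CompatClosure R u u') :
    CompatClosure R (t.subst x u) (t'.subst x u') := by
  have hu' : Closed u' := (hr.fv_eq_of_closed hR).symm.trans hu
  induction h with
  | @base p q h =>
    have hp : x ∉ p.fv := (hR h).1 ▸ Finset.notMem_empty x
    have hq : x ∉ q.fv := (hR h).2 ▸ Finset.notMem_empty x
    rw [Tm.subst_of_notMem_fv hu hp, Tm.subst_of_notMem_fv hu' hq]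
    exact .base h
  | var y =>
    simp only [Tm.subst]
    split_ifs
    exacts [hr, .var y]
  | lam y h ih =>
    rw [Tm.subst_lam_of_closed hu, Tm.subst_lam_of_closed hu']
    split_ifs
    exacts [.lam y h, .lam y ih]
  | app _ _ iht ihu =>
    simp only [Tm.subst]
    exact .app iht ihu
  | shift y h ih =>
    rw [Tm.subst_shift_of_closed hu, Tm.subst_shift_of_closed hu']
    split_ifs
    exacts [.shift y h, .shift y ih]
  | reset _ ih =>
    simp only [Tm.subst]
    exact .reset ih

theorem contFun {E E' : ECtx} (hE : LiftFun (CompatClosure R) (CompatClosure R) E.plug E'.plug) :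
    CompatClosure R (contFun E) (contFun E') := by
  have hfv : E.fv = E'.fv := by
    have hid : idTm.fv = ∅ := closed_idTm
    simpa only [ECtx.fv_plug, hid, Finset.union_empty] using
      (hE (refl idTm)).fv_eq_of_closed hR
  unfold LambdaS.contFun
  rw [hfv]
  exact .lam _ (.reset (hE (.var _)))

theorem lockstep_reset (hc : Closed t) (ht : CompatClosure R t t') (ih : Lockstep R t t') :
    Lockstep R (.reset t) (.reset t') := by
  cases ih with
  | value hv hv' => exact .step (.resetVal hv) (.resetVal hv') ht
  | @stuck E E' k s s' hE hs =>
    have hcE := closed_contFun (ECtx.closed_plug.1 hc).1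
    exact .step (.capture E k s) (.capture E' k s') (.reset (hs.subst hR hcE (.contFun hR hE)))
  | step h h' hs => exact .step (.reset h) (.reset h') (.reset hs)
  | base hF hpq => exact .base (F := .reset _) (F' := .reset _) (fun _ _ h => .reset (hF h)) hpq

variable (hval : ∀ ⦃p q⦄, R p q → ¬ IsValue p)
include hval

theorem lockstep_app (hc : Closed (.app t u)) (ht : CompatClosure R t t')
    (hu : CompatClosure R u u') (iht : Lockstep R t t') (ihu : Lockstep R u u') :
    Lockstep R (.app t u) (.app t' u') := by
  cases iht with
  | stuck k hE hs =>
    exact .stuck (E := .appL _ u) (E' := .appL _ u') k (fun _ _ h => .app (hE h) hu) hs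
  | step h h' hs => exact .step (.appL u h) (.appL u' h') (.app hs hu)
  | base hF hpq =>
    exact .base (F := .appL _ u) (F' := .appL _ u') (fun _ _ h => .app (hF h) hu) hpq
  | value hv hv' =>
    cases ihu with
    | stuck k hE hs =>
      exact .stuck (E := .appR t hv _) (E' := .appR t' hv' _) k (fun _ _ h => .app ht (hE h)) hs
    | step h h' hs => exact .step (.appR hv h) (.appR hv' h') (.app ht hs)
    | base hF hpq =>
      exact .base (F := .appR t hv _) (F' := .appR t' hv' _) (fun _ _ h => .app ht (hF h)) hpq
    | value hw hw' =>
      obtain ⟨hct, hcu⟩ := closed_app.1 hc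
      cases hv with
      | var x => exact absurd hct (Finset.singleton_ne_empty x)
      | lam x b =>
        cases ht with
        | base hpq => exact absurd (.lam x b) (hval hpq)
        | lam _ hb => exact .step (.beta hw) (.beta hw') (hb.subst hR hcu hu)

theorem lockstep (h : CompatClosure R t t') (hc : Closed t) : Lockstep R t t' := by
  induction h with
  | base hpq => exact .base (F := .hole) (F' := .hole) (fun _ _ h => h) hpq
  | var x => exact .value (.var x) (.var x)
  | lam x => exact .value (.lam x _) (.lam x _)
  | shift k hs => exact .stuck (E := .hole) (E' := .hole) k (fun _ _ h => h) hs
  | app ht hu iht ihu =>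
    obtain ⟨hct, hcu⟩ := closed_app.1 hc
    exact lockstep_app hR hval hc ht hu (iht hct) (ihu hcu)
  | reset ht ih => exact lockstep_reset hR hc ht (ih hc)

end Closed

end CompatClosure

/-! ### Contextual equivalence of terms with a common reduct -/

/-- Closed terms `p` and `q` such that `p` diverges or has a common reduct with `q`. The reduct is
a proper one of `p`, so that replacing `p` by it makes progress in a reduction of `p`. -/
structure DivergesOrJoins (p q : Tm) : Prop where
  closed_left : Closed p
  closed_right : Closed q
  exists_reduct : Terminates p → ∃ w, p ⇝⁺ w ∧ q ⇝* w

theorem DivergesOrJoins.not_isValue {p q : Tm} (h : DivergesOrJoins p q) : ¬ IsValue p := by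
  intro hp
  obtain ⟨w, hpw, -⟩ := h.exists_reduct (terminates_of_reduces .refl fun _ => hp.not_step)
  obtain ⟨s, hps, -⟩ := TransGen.head'_iff.1 hpw
  exact hp.not_step hps

/-- The two terms have the same observable behaviour, and do not diverge: they both evaluate to
values, or both evaluate to control-stuck terms. -/
def SameOutcome (t t' : Tm) : Prop :=
  (EvalsToValue t ∧ EvalsToValue t') ∨ (EvalsToStuck t ∧ EvalsToStuck t')

namespace SameOutcome

theorem of_reduces {t t' s s' : Tm} (h : t ⇝* s) (h' : t' ⇝* s') (hs : SameOutcome s s') :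
    SameOutcome t t' := by
  rw [← red_eq_step] at h h'
  rcases hs with ⟨⟨v, hv⟩, ⟨v', hv'⟩⟩ | ⟨⟨r, hr⟩, ⟨r', hr'⟩⟩
  · exact .inl ⟨⟨v, hv.imp_left h.trans⟩, ⟨v', hv'.imp_left h'.trans⟩⟩
  · exact .inr ⟨⟨r, hr.imp_left h.trans⟩, ⟨r', hr'.imp_left h'.trans⟩⟩

theorem evalsToValue {t t' : Tm} (h : SameOutcome t t') (ht : EvalsToValue t) : EvalsToValue t' :=
  h.elim And.right fun hs => absurd hs.1 ht.not_evalsToStuck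

theorem evalsToStuck {t t' : Tm} (h : SameOutcome t t') (ht : EvalsToStuck t) : EvalsToStuck t' :=
  h.elim (fun hv => absurd ht hv.1.not_evalsToStuck) And.right

end SameOutcome

theorem CompatClosure.sameOutcome {t t' : Tm} (h : CompatClosure DivergesOrJoins t t')
    (hc : Closed t) (ht : Terminates t) : SameOutcome t t' := by
  replace ht := Acc.transGen ht
  induction ht generalizing t' with
  | intro t hacc ih =>
    have ht : Terminates t := acc_transGen_iff.1 ⟨t, hacc⟩
    have hR ⦃p q : Tm⦄ (hpq : DivergesOrJoins p q) := And.intro hpq.closed_left hpq.closed_right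
    cases h.lockstep hR (fun _ _ hpq => hpq.not_isValue) hc with
    | value hv hv' => exact .inl ⟨⟨t, .refl, hv⟩, ⟨t', .refl, hv'⟩⟩
    | stuck k _ _ => exact .inr ⟨⟨_, .refl, _, k, _, rfl⟩, ⟨_, .refl, _, k, _, rfl⟩⟩
    | step hts hts' hs =>
      exact .of_reduces (.single hts) (.single hts') (ih _ (.single hts) hs (hc.step hts))
    | @base F F' p q hF hpq =>
      obtain ⟨w, hpw, hqw⟩ := hpq.exists_reduct ht.of_plug
      have hF_red : F.plug p ⇝⁺ F.plug w := TransGen.lift F.plug (fun _ _ => Step.plug F) _ _ hpw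
      have hF'_red : F'.plug q ⇝* F'.plug w := reduces_plug F' hqw
      exact .of_reduces hF_red.to_reflTransGen hF'_red
        (ih _ (transGen_swap.2 hF_red) (hF (.refl w)) (hc.reduces hF_red.to_reflTransGen))

theorem DivergesOrJoins.sameOutcome_plug {p q : Tm} (h : DivergesOrJoins p q) {C : Ctx}
    (hC : C.fv = ∅) (ht : Terminates (C.plug p)) : SameOutcome (C.plug p) (C.plug q) :=
  (CompatClosure.plug h C).sameOutcome ((C.fv_plug_of_closed h.closed_left).trans hC) ht

theorem DivergesOrJoins.ctxEquiv {p q : Tm} (hpq : DivergesOrJoins p q)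
    (hqp : DivergesOrJoins q p) : CtxEquiv p q := by
  intro C hC
  exact ⟨⟨fun h => (hpq.sameOutcome_plug hC h.terminates).evalsToValue h,
      fun h => (hqp.sameOutcome_plug hC h.terminates).evalsToValue h⟩,
    ⟨fun h => (hpq.sameOutcome_plug hC h.terminates).evalsToStuck h,
      fun h => (hqp.sameOutcome_plug hC h.terminates).evalsToStuck h⟩⟩

/-! ### Delimited terms -/

-- A term is related to itself by the closure of the empty relation, which has no base case.
theorem Closed.progress {t : Tm} (ht : Closed t) : IsValue t ∨ ControlStuck t ∨ ∃ t', t ⇝ t' := by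
  obtain ⟨t', h⟩ : ∃ t', Lockstep (fun _ _ => False) t t' :=
    ⟨t, (CompatClosure.refl t).lockstep nofun nofun ht⟩
  cases h with
  | value hv => exact .inl hv
  | stuck k => exact .inr (.inl ⟨_, k, _, rfl⟩)
  | step h => exact .inr (.inr ⟨_, h⟩)
  | base _ h => exact h.elim

theorem exists_value_of_terminates_reset {t : Tm} (hc : Closed t) (ht : Terminates (.reset t)) :
    ∃ w, IsValue w ∧ .reset t ⇝⁺ w := by
  generalize hr : Tm.reset t = r at ht
  induction ht generalizing t with
  | intro r _ ih =>
    subst hr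
    have of_step {s : Tm} (h : Tm.reset t ⇝ .reset s) : ∃ w, IsValue w ∧ .reset t ⇝⁺ w := by
      obtain ⟨w, hw, hsw⟩ := ih _ h (closed_reset.1 ((closed_reset.2 hc).step h)) rfl
      exact ⟨w, hw, .head h hsw⟩
    rcases hc.progress with hv | ⟨E, k, s, rfl⟩ | ⟨t', h⟩
    · exact ⟨t, hv, .single (.resetVal hv)⟩
    · exact of_step (.capture E k s)
    · exact of_step (.reset h)

theorem app_lam_reduces_of_notMem_fv {y : ℕ} {t u w : Tm} (hy : y ∉ t.fv) (hu : Closed u)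
    (huw : u ⇝* w) (hw : IsValue w) : .app (.lam y t) u ⇝⁺ t := by
  have harg : Tm.app (.lam y t) u ⇝* .app (.lam y t) w :=
    reduces_plug (.appR _ (.lam y t) .hole) huw
  have hbeta : Tm.app (.lam y t) w ⇝ t := by
    simpa only [Tm.subst_of_notMem_fv (hu.reduces huw) hy] using Step.beta (x := y) (t := t) hw
  exact .tail' harg hbeta

theorem reset_dup_openCtxEquiv_general {t : Tm} (ht : Closed t) (y : ℕ) :
    CtxEquiv (.reset t) (.app (.lam y (.reset t)) (.reset t)) := by
  have hp : Closed (.reset t) := closed_reset.2 ht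
  have hy : y ∉ (Tm.reset t).fv := hp ▸ Finset.notMem_empty y
  have hq : Closed (.app (.lam y (.reset t)) (.reset t)) := closed_app.2 ⟨hp.lam y, hp⟩
  refine DivergesOrJoins.ctxEquiv ⟨hp, hq, fun hterm => ?_⟩ ⟨hq, hp, fun hterm => ?_⟩
  · obtain ⟨w, hw, hpw⟩ := exists_value_of_terminates_reset ht hterm
    have hqp := app_lam_reduces_of_notMem_fv hy hp hpw.to_reflTransGen hw
    exact ⟨w, hpw, (hqp.trans hpw).to_reflTransGen⟩
  · have hp_term : Terminates (.reset t) :=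
      Terminates.of_plug (F := .appR _ (.lam y (.reset t)) .hole) hterm
    obtain ⟨w, hw, hpw⟩ := exists_value_of_terminates_reset ht hp_term
    exact ⟨.reset t, app_lam_reduces_of_notMem_fv hy hp hpw.to_reflTransGen hw, .refl⟩

/-- The open terms `⟨x i⟩` and `(λy.⟨x i⟩) ⟨x i⟩` are related by
the open extension of contextual equivalence: for every closed value `v` (and
any `y` not free in the terms), `⟨v i⟩ ≈ (λy.⟨v i⟩) ⟨v i⟩`. -/
theorem reset_dup_openCtxEquiv (v : Tm) (hv : IsValue v) (hc : Closed v)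
    (y : ℕ) (hy : y ∉ (Tm.reset (Tm.app v idTm)).fv) :
    CtxEquiv (Tm.reset (Tm.app v idTm))
      (Tm.app (Tm.lam y (Tm.reset (Tm.app v idTm))) (Tm.reset (Tm.app v idTm))) :=
  reset_dup_openCtxEquiv_general (closed_app.2 ⟨hc, closed_idTm⟩) y

end LambdaS
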